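/- Let D ≤ G be a 2-Sylow subgroup (so |D| = 8). Then there exist algebraically independent homogeneous invariants f'_1, …, f'_6 ∈ S[W'^*]^D of degrees 1, 1, 2, 2, 2, 4 and homogeneous invariants g'_1 = 1, g'_2, g'_3, g'_4 ∈ S[W'^*]^D of degrees 0, 3, 3, 6 such that S[W'^*]^D is a free F_2[f'_1, …, f'_6]-module with basis {g'_1, g'_2, g'_3, g'_4}; in particular S[W'^*]^D is Cohen-Macaulay. -/

import Mathlib

set_option synthInstance.maxHeartbeats 1000000
set_option maxHeartbeats 1000000

open MvPolynomial

/-- The field with two elements. -/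
abbrev F2 := ZMod 2

/-- `G = GL₃(𝔽₂)`. -/
abbrev G3 := GL (Fin 3) F2

/-- The generator `A` of `G`. -/
def Agen : G3 := ⟨!![1,0,1; 0,1,0; 0,0,1], !![1,0,1; 0,1,0; 0,0,1], by decide, by decide⟩

/-- The generator `B` of `G`. -/
def Bgen : G3 := ⟨!![0,0,1; 1,0,0; 0,1,0], !![0,1,0; 0,0,1; 1,0,0], by decide, by decide⟩

/-- The matrix `D(A)` of the action on `W'^* = 𝔽₂⁶`. -/
def DA6 : Matrix (Fin 6) (Fin 6) F2 :=
  !![1,0,1,0,0,1; 0,1,0,0,0,0; 0,0,1,0,0,0; 0,0,0,1,1,0; 0,0,0,0,1,0; 0,0,0,0,0,1]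

/-- The matrix `D(B)` of the action on `W'^* = 𝔽₂⁶`. -/
def DB6 : Matrix (Fin 6) (Fin 6) F2 :=
  !![0,0,1,0,0,0; 1,0,0,0,0,0; 0,1,0,0,0,0; 0,0,0,0,0,1; 0,0,0,1,0,0; 0,0,0,0,1,0]

/-- The algebra endomorphism of `S[W'^*] = 𝔽₂[a,b,c,d,e,f]` induced by the right action of
`σ` on the linear forms (coefficient row vectors are multiplied on the right by `D σ`; in
particular the variable `Xᵢ` is sent to the linear form given by the `i`-th row of `D σ`). -/
noncomputable def polyAct (D : G3 →* GL (Fin 6) F2) (σ : G3) :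
    MvPolynomial (Fin 6) F2 →ₐ[F2] MvPolynomial (Fin 6) F2 :=
  aeval (fun i => ∑ j, (D σ : Matrix (Fin 6) (Fin 6) F2) i j • X j)

/-- The invariant ring `S[W'^*]^H` for a subgroup `H ≤ G`. -/
noncomputable def invH (D : G3 →* GL (Fin 6) F2) (H : Subgroup G3) :
    Subalgebra F2 (MvPolynomial (Fin 6) F2) where
  carrier := {p | ∀ σ ∈ H, polyAct D σ p = p}
  mul_mem' := fun ha hb σ hσ => by rw [map_mul, ha σ hσ, hb σ hσ]
  add_mem' := fun ha hb σ hσ => by rw [map_add, ha σ hσ, hb σ hσ]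
  one_mem' := fun σ _ => map_one _
  zero_mem' := fun σ _ => map_zero _
  algebraMap_mem' := fun r σ _ => AlgHom.commutes _ r

/-- The invariant ring `S[W'^*]^G`. -/
noncomputable def invG (D : G3 →* GL (Fin 6) F2) :
    Subalgebra F2 (MvPolynomial (Fin 6) F2) :=
  invH D ⊤

/-!
Write `a, b, c, d, e, f` for the variables. For a Sylow subgroup generated by two transvections,
repeatedly trading a variable on which an involution acts by `u ↦ u + l` for the product
`u (u + l)` shows that, once `e` and `b + e` are inverted, every invariant is a combination
`∑ j, F j (f₁, …, f₆) * g j`. To clear the denominators, substitute `e = 0` or `e = b`: the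
products `f ^ α * g j` that survive have distinct lexicographic leading exponents, so `e` or
`b + e` divides such a combination only if the corresponding variable divides every `F j`. The same
divisibility makes the representation unique, and conjugation carries the result to any other Sylow
subgroup.
-/

section QuadraticExtension

variable {K A : Type*} [CommRing K] [CommRing A] [Algebra K A]

theorem exists_eq_add_mul_of_mem_adjoin {B : Subalgebra K A} {u k l : A} (hk : k ∈ B) (hl : l ∈ B)
    (hu : u ^ 2 = k * u + l) {s : Set A} (hs : s ⊆ insert u (B : Set A)) {x : A}
    (hx : x ∈ Algebra.adjoin K s) : ∃ α ∈ B, ∃ β ∈ B, x = α + β * u := by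
  induction hx using Algebra.adjoin_induction with
  | mem x hx =>
    rcases hs hx with rfl | h
    · exact ⟨0, B.zero_mem, 1, B.one_mem, by ring⟩
    · exact ⟨x, h, 0, B.zero_mem, by ring⟩
  | algebraMap r => exact ⟨_, B.algebraMap_mem r, 0, B.zero_mem, by ring⟩
  | add x y _ _ hx hy =>
    obtain ⟨α, hα, β, hβ, rfl⟩ := hx
    obtain ⟨γ, hγ, δ, hδ, rfl⟩ := hy
    exact ⟨_, B.add_mem hα hγ, _, B.add_mem hβ hδ, by ring⟩
  | mul x y _ _ hx hy =>
    obtain ⟨α, hα, β, hβ, rfl⟩ := hx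
    obtain ⟨γ, hγ, δ, hδ, rfl⟩ := hy
    refine ⟨α * γ + β * δ * l, B.add_mem (B.mul_mem hα hγ) (B.mul_mem (B.mul_mem hβ hδ) hl),
      α * δ + β * γ + β * δ * k, B.add_mem (B.add_mem (B.mul_mem hα hδ) (B.mul_mem hβ hγ))
        (B.mul_mem (B.mul_mem hβ hδ) hk), ?_⟩
    linear_combination β * δ * hu

theorem exists_pow_mul_mem_of_mem_adjoin {B : Subalgebra K A} {h u : A} (hh : h ∈ B)
    (hu : h * u ∈ B) {s : Set A} (hs : s ⊆ insert u (B : Set A)) {x : A}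
    (hx : x ∈ Algebra.adjoin K s) : ∃ n : ℕ, h ^ n * x ∈ B := by
  induction hx using Algebra.adjoin_induction with
  | mem x hx =>
    rcases hs hx with rfl | hB
    · exact ⟨1, by rwa [pow_one]⟩
    · exact ⟨0, by rwa [pow_zero, one_mul]⟩
  | algebraMap r => exact ⟨0, by rw [pow_zero, one_mul]; exact B.algebraMap_mem r⟩
  | add x y _ _ hx hy =>
    obtain ⟨m, hm⟩ := hx
    obtain ⟨n, hn⟩ := hy
    refine ⟨m + n, ?_⟩
    convert B.add_mem (B.mul_mem (B.pow_mem hh n) hm) (B.mul_mem (B.pow_mem hh m) hn) using 1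
    ring
  | mul x y _ _ hx hy =>
    obtain ⟨m, hm⟩ := hx
    obtain ⟨n, hn⟩ := hy
    refine ⟨m + n, ?_⟩
    convert B.mul_mem hm hn using 1
    ring

/-- The product `u (u + l)` of the orbit of `u` under an involution `u ↦ u + l`, the constant term
of the quadratic equation of `u` over the fixed points. -/
def orbitProd (u l : A) : A := u * (u + l)

theorem map_orbitProd {B : Type*} [CommRing B] [Algebra K B] (φ : A →ₐ[K] B) (u l : A) :
    φ (orbitProd u l) = orbitProd (φ u) (φ l) := by
  rw [orbitProd, map_mul, map_add, orbitProd]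

section CharTwo

variable [CharP A 2]

theorem sq_eq_mul_add_orbitProd (u l : A) : u ^ 2 = l * u + orbitProd u l := by
  rw [orbitProd]
  linear_combination -(l * u) * CharTwo.two_eq_zero (R := A)

theorem orbitProd_add_right (u l : A) : orbitProd (u + l) l = orbitProd u l := by
  rw [orbitProd, orbitProd, add_assoc, CharTwo.add_self_eq_zero, add_zero, mul_comm]

end CharTwo

section Family

variable {ι : Type*} {v w : ι → A} {i : ι}

theorem range_subset_insert_adjoin_range (hvw : ∀ j ≠ i, w j = v j) :
    Set.range v ⊆ insert (v i) (Algebra.adjoin K (Set.range w) : Set A) := by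
  rintro _ ⟨j, rfl⟩
  obtain rfl | hj := eq_or_ne j i
  · exact Set.mem_insert _ _
  · exact Set.mem_insert_of_mem _ (Algebra.subset_adjoin ⟨j, hvw j hj⟩)

theorem exists_pow_mul_mem_adjoin_range {x h : A} (hx : x ∈ Algebra.adjoin K (Set.range v))
    (hvw : ∀ j ≠ i, w j = v j) (hh : h ∈ Algebra.adjoin K (Set.range w))
    (hi : h * v i ∈ Algebra.adjoin K (Set.range w)) :
    ∃ n : ℕ, h ^ n * x ∈ Algebra.adjoin K (Set.range w) :=
  exists_pow_mul_mem_of_mem_adjoin hh hi (range_subset_insert_adjoin_range hvw) hx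

theorem mem_adjoin_range_of_apply_eq [CharP A 2] [NoZeroDivisors A] {φ : A →ₐ[K] A} {x l : A}
    (hx : x ∈ Algebra.adjoin K (Set.range v)) (hφx : φ x = x) (hvw : ∀ j ≠ i, w j = v j)
    (hwi : w i = orbitProd (v i) l) (hl : l ∈ Algebra.adjoin K (Set.range w)) (hl0 : l ≠ 0)
    (hφl : φ l = l) (hφi : φ (v i) = v i + l) (hφv : ∀ j ≠ i, φ (v j) = v j) :
    x ∈ Algebra.adjoin K (Set.range w) := by
  have hfixed : Algebra.adjoin K (Set.range w) ≤ AlgHom.equalizer φ (AlgHom.id K A) := by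
    refine Algebra.adjoin_le ?_
    rintro _ ⟨j, rfl⟩
    obtain rfl | hj := eq_or_ne j i
    · change φ (w j) = w j
      rw [hwi, map_orbitProd, hφi, hφl, orbitProd_add_right]
    · change φ (w j) = w j
      rw [hvw j hj, hφv j hj]
  obtain ⟨α, hα, β, hβ, rfl⟩ := exists_eq_add_mul_of_mem_adjoin hl
    (Algebra.subset_adjoin ⟨i, hwi⟩) (sq_eq_mul_add_orbitProd _ _)
    (range_subset_insert_adjoin_range hvw) hx
  have hβl : β * l = 0 := by
    rw [map_add, map_mul, hfixed hα, hfixed hβ, hφi] at hφx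
    simp only [AlgHom.id_apply] at hφx
    linear_combination hφx
  rw [(mul_eq_zero.1 hβl).resolve_right hl0, zero_mul, add_zero]
  exact hα

end Family

end QuadraticExtension

section LeadingExponents

theorem linearIndepOn_of_degree_injOn {σ ι R : Type*} [CommRing R] [NoZeroDivisors R]
    (m : MonomialOrder σ) {v : ι → MvPolynomial σ R} {s : Set ι} (hne : ∀ x ∈ s, v x ≠ 0)
    (hinj : s.InjOn fun x => m.degree (v x)) : LinearIndepOn R v s := by
  classical
  rw [linearIndepOn_iff']
  intro t c hts hsum
  by_contra! hcon
  obtain ⟨y, hyt, hyc⟩ := hcon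
  obtain ⟨x, hx, hmax⟩ := (t.filter (fun x => c x ≠ 0)).exists_max_image
    (fun x => m.toSyn (m.degree (v x))) ⟨y, Finset.mem_filter.2 ⟨hyt, hyc⟩⟩
  rw [Finset.mem_filter] at hx
  have hcoeff := congrArg (coeff (m.degree (v x))) hsum
  rw [coeff_sum, coeff_zero, Finset.sum_eq_single_of_mem x hx.1, coeff_smul, smul_eq_mul,
    mul_eq_zero, m.coeff_degree_eq_zero_iff] at hcoeff
  · exact hcoeff.elim hx.2 (hne x (hts hx.1))
  · intro z hz hzx
    rw [coeff_smul, smul_eq_mul, mul_eq_zero, or_iff_not_imp_left]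
    intro hcz
    refine m.coeff_eq_zero_of_lt ((hmax z (Finset.mem_filter.2 ⟨hz, hcz⟩)).lt_of_ne fun heq => ?_)
    exact hzx (hinj (hts hz) (hts hx.1) (m.toSyn.injective heq))

variable {n : ℕ} {R : Type*} [CommRing R]

/-- The polynomial `p` is monic with leading exponent `v` for the lexicographic order in which
`X 0` is the largest variable. -/
def LexLeads (p : MvPolynomial (Fin n) R) (v : Fin n → ℕ) : Prop :=
  MonomialOrder.lex.Monic p ∧ ⇑(MonomialOrder.lex.degree p) = v

theorem prod_univ_X_pow_eq_monomial (v : Fin n → ℕ) :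
    ∏ i, (X i : MvPolynomial (Fin n) R) ^ v i =
      monomial (Finsupp.equivFunOnFinite.symm v) 1 := by
  rw [monomial_eq, Finsupp.prod_fintype _ _ fun _ => pow_zero _, C_1, one_mul]
  rfl

namespace LexLeads

variable {p q : MvPolynomial (Fin n) R} {v w : Fin n → ℕ}

theorem one : LexLeads (1 : MvPolynomial (Fin n) R) 0 :=
  ⟨MonomialOrder.monic_one, by rw [MonomialOrder.degree_one, Finsupp.coe_zero]⟩

variable [Nontrivial R]

theorem of_prod_add_sum (v : Fin n → ℕ) (l : List (Fin n → ℕ))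
    (hl : ∀ w ∈ l, ∃ i, (∀ j < i, w j = v j) ∧ w i < v i)
    (hp : p = ∏ i, X i ^ v i + (l.map fun w => ∏ i, X i ^ w i).sum) : LexLeads p v := by
  classical
  subst hp
  simp only [prod_univ_X_pow_eq_monomial]
  induction l with
  | nil =>
    rw [List.map_nil, List.sum_nil, add_zero]
    refine ⟨MonomialOrder.monic_monomial_one, ?_⟩
    rw [MonomialOrder.degree_monomial, if_neg one_ne_zero]
    rfl
  | cons w l ih =>
    have ih := ih fun u hu => hl u (List.mem_cons_of_mem _ hu)
    obtain ⟨i, hi, hlt⟩ := hl w List.mem_cons_self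
    rw [List.map_cons, List.sum_cons, add_left_comm, add_comm]
    set q := monomial (Finsupp.equivFunOnFinite.symm v) (1 : R) +
      (l.map fun w => monomial (Finsupp.equivFunOnFinite.symm w) 1).sum
    have hdeg : MonomialOrder.lex.toSyn (MonomialOrder.lex.degree
        (monomial (Finsupp.equivFunOnFinite.symm w) (1 : R))) <
          MonomialOrder.lex.toSyn (MonomialOrder.lex.degree q) := by
      rw [MonomialOrder.degree_monomial, if_neg one_ne_zero, MonomialOrder.lex_lt_iff]
      exact ⟨i, fun j hj => (hi j hj).trans (congrFun ih.2 j).symm,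
        hlt.trans_eq (congrFun ih.2 i).symm⟩
    exact ⟨ih.1.add_of_lt hdeg, by rw [MonomialOrder.degree_add_of_lt hdeg, ih.2]⟩

variable [NoZeroDivisors R]

theorem mul (hp : LexLeads p v) (hq : LexLeads q w) : LexLeads (p * q) (v + w) :=
  ⟨hp.1.mul hq.1, by
    rw [MonomialOrder.degree_mul hp.1.ne_zero hq.1.ne_zero, Finsupp.coe_add, hp.2, hq.2]⟩

theorem pow (hp : LexLeads p v) (e : ℕ) : LexLeads (p ^ e) (e • v) := by
  induction e with
  | zero => simpa only [pow_zero, zero_smul] using one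
  | succ e ih => simpa only [pow_succ, succ_nsmul] using ih.mul hp

theorem prod {ι : Type*} {s : Finset ι} {f : ι → MvPolynomial (Fin n) R} {u : ι → Fin n → ℕ}
    (hf : ∀ i ∈ s, LexLeads (f i) (u i)) : LexLeads (∏ i ∈ s, f i) (∑ i ∈ s, u i) := by
  classical
  induction s using Finset.induction_on with
  | empty => exact one
  | insert i s hi ih =>
    rw [Finset.prod_insert hi, Finset.sum_insert hi]
    exact (hf i (Finset.mem_insert_self i s)).mul
      (ih fun j hj => hf j (Finset.mem_insert_of_mem hj))

end LexLeads

end LeadingExponents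

section HironakaDecomposition

variable {K A B ι κ : Type*} [CommRing K] [CommRing A] [Algebra K A] [CommRing B] [Algebra K B]

/-- The product `f ^ α * g j` indexed by the pair `⟨j, α⟩`. -/
def hironakaTerm (f : ι → A) (g : κ → A) (x : (_ : κ) × (ι →₀ ℕ)) : A :=
  (x.2.prod fun i e => f i ^ e) * g x.1

variable [Fintype κ]

/-- The map `F ↦ ∑ j, F j (f) * g j`. It is bijective exactly when `A` has the Hironaka
decomposition `⨁ j, K[f] * g j` with primary generators `f` and secondary generators `g`. -/
noncomputable def hironakaMap (K : Type*) [CommRing K] [Algebra K A] (f : ι → A) (g : κ → A) :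
    (κ → MvPolynomial ι K) →ₗ[K] A :=
  ∑ j, LinearMap.mulRight K (g j) ∘ₗ (aeval f).toLinearMap ∘ₗ LinearMap.proj j

theorem hironakaMap_apply (f : ι → A) (g : κ → A) (F : κ → MvPolynomial ι K) :
    hironakaMap K f g F = ∑ j, aeval f (F j) * g j := by
  rw [hironakaMap, LinearMap.sum_apply]
  rfl

theorem map_hironakaMap (φ : A →ₐ[K] B) (f : ι → A) (g : κ → A) (F : κ → MvPolynomial ι K) :
    φ (hironakaMap K f g F) = hironakaMap K (φ ∘ f) (φ ∘ g) F := by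
  simp only [hironakaMap_apply, map_sum, map_mul, comp_aeval_apply, Function.comp_def]

theorem hironakaMap_mul (f : ι → A) (g : κ → A) (q : MvPolynomial ι K)
    (F : κ → MvPolynomial ι K) :
    hironakaMap K f g (fun j => q * F j) = aeval f q * hironakaMap K f g F := by
  simp only [hironakaMap_apply, map_mul, Finset.mul_sum, mul_assoc]

theorem hironakaMap_eq_sum_hironakaTerm (f : ι → A) (g : κ → A) (F : κ → MvPolynomial ι K) :
    hironakaMap K f g F = ∑ x ∈ Finset.univ.sigma fun j => (F j).support,
      coeff x.2 (F x.1) • hironakaTerm f g x := by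
  rw [hironakaMap_apply, Finset.sum_sigma]
  refine Finset.sum_congr rfl fun j _ => ?_
  rw [aeval_def, eval₂_eq, Finset.sum_mul]
  refine Finset.sum_congr rfl fun α _ => ?_
  rw [Algebra.smul_def, mul_assoc]
  rfl

theorem coeff_eq_zero_of_hironakaMap_eq_zero {f : ι → A} {g : κ → A}
    {s : Set ((_ : κ) × (ι →₀ ℕ))} (hvanish : ∀ x ∉ s, hironakaTerm f g x = 0)
    (hindep : LinearIndepOn K (hironakaTerm f g) s) {F : κ → MvPolynomial ι K}
    (hF : hironakaMap K f g F = 0) {x : (_ : κ) × (ι →₀ ℕ)} (hx : x ∈ s) :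
    coeff x.2 (F x.1) = 0 := by
  classical
  by_contra hcoeff
  rw [hironakaMap_eq_sum_hironakaTerm] at hF
  rw [← Finset.sum_filter_of_ne (p := (· ∈ s))] at hF
  · refine hcoeff (linearIndepOn_iff'.1 hindep _ _ (fun y hy => (Finset.mem_filter.1 hy).2) hF x ?_)
    simp only [Finset.mem_filter, Finset.mem_sigma, Finset.mem_univ, true_and]
    exact ⟨mem_support_iff.2 hcoeff, hx⟩
  · intro y _ hy
    by_contra hys
    exact hy (by rw [hvanish y hys, smul_zero])

theorem X_dvd_of_dvd_hironakaMap {f : ι → A} {g : κ → A} {i : ι} (φ : A →ₐ[K] B)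
    (hφ : φ (f i) = 0)
    (hindep : LinearIndepOn K (hironakaTerm (φ ∘ f) (φ ∘ g)) {x | x.2 i = 0})
    {F : κ → MvPolynomial ι K} (hF : f i ∣ hironakaMap K f g F) (j : κ) : X i ∣ F j := by
  have hF0 : hironakaMap K (φ ∘ f) (φ ∘ g) F = 0 := by
    obtain ⟨p, hp⟩ := hF
    rw [← map_hironakaMap, hp, map_mul, hφ, zero_mul]
  rw [X_dvd_iff_modMonomial_eq_zero]
  ext α
  by_cases hα : α i = 0
  · rw [coeff_modMonomial_of_not_le, coeff_zero]
    · refine coeff_eq_zero_of_hironakaMap_eq_zero (fun x hx => ?_) hindep hF0 (x := ⟨j, α⟩) hα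
      rw [hironakaTerm, Finsupp.prod, Finset.prod_eq_zero (Finsupp.mem_support_iff.2 hx), zero_mul]
      rw [Function.comp_apply, hφ, zero_pow hx]
    · rw [Finsupp.single_le_iff, hα]
      exact Nat.not_succ_le_zero 0
  · exact coeff_modMonomial_of_le _ (Finsupp.single_le_iff.2 (Nat.one_le_iff_ne_zero.2 hα))

section Divisibility

variable [NoZeroDivisors A] {f : ι → A} {g : κ → A} {i : ι} (hfi : f i ≠ 0)
  (hdvd : ∀ F : κ → MvPolynomial ι K, f i ∣ hironakaMap K f g F → ∀ j, X i ∣ F j)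

include hfi hdvd

theorem exists_eq_X_mul_of_dvd_hironakaMap {F : κ → MvPolynomial ι K} {p : A}
    (hF : hironakaMap K f g F = f i * p) :
    ∃ F', hironakaMap K f g F' = p ∧ ∀ j, F j = X i * F' j := by
  choose F' hF' using hdvd F ⟨p, hF⟩
  refine ⟨F', mul_left_cancel₀ hfi ?_, hF'⟩
  rw [← hF, funext hF', hironakaMap_mul, aeval_X]

theorem mem_range_hironakaMap_of_pow_mul_mem {p : A} (n : ℕ)
    (hp : f i ^ n * p ∈ Set.range (hironakaMap K f g)) : p ∈ Set.range (hironakaMap K f g) := by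
  induction n with
  | zero => simpa only [pow_zero, one_mul] using hp
  | succ n ih =>
    obtain ⟨F, hF⟩ := hp
    rw [pow_succ', mul_assoc] at hF
    obtain ⟨F', hF', -⟩ := exists_eq_X_mul_of_dvd_hironakaMap hfi hdvd hF
    exact ih ⟨F', hF'⟩

theorem hironakaMap_injective_of_dvd : Function.Injective (hironakaMap K f g) := by
  have hpow (n : ℕ) : ∀ F, hironakaMap K f g F = 0 → ∀ j, X i ^ n ∣ F j := by
    induction n with
    | zero => exact fun F _ j => by rw [pow_zero]; exact one_dvd _
    | succ n ih =>
      intro F hF j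
      obtain ⟨F', hF', hj⟩ :=
        exists_eq_X_mul_of_dvd_hironakaMap hfi hdvd (hF.trans (mul_zero _).symm)
      rw [hj, pow_succ']
      exact mul_dvd_mul_left _ (ih F' hF' j)
  refine (injective_iff_map_eq_zero _).2 fun F hF => ?_
  ext j α
  have hmod := hpow (α i + 1) F hF j
  rw [X_pow_eq_monomial, monomial_one_dvd_iff_modMonomial_eq_zero] at hmod
  rw [← coeff_modMonomial_of_not_le (s := Finsupp.single i (α i + 1)), hmod, Pi.zero_apply]
  rw [Finsupp.single_le_iff]
  exact Nat.not_succ_le_self _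

end Divisibility

variable {f : ι → A} {g : κ → A}

theorem algebraicIndependent_of_hironakaMap_injective [Nonempty κ]
    (h : Function.Injective (hironakaMap K f g)) : AlgebraicIndependent K f := by
  classical
  rw [algebraicIndependent_iff]
  intro p hp
  have hsingle : hironakaMap K f g (Pi.single (Classical.arbitrary κ) p) = 0 := by
    rw [hironakaMap_apply, Finset.sum_eq_single (Classical.arbitrary κ)]
    · rw [Pi.single_eq_same, hp, zero_mul]
    · intro j _ hj
      rw [Pi.single_eq_of_ne hj, map_zero, zero_mul]
    · exact fun hmem => absurd (Finset.mem_univ _) hmem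
  simpa using (injective_iff_map_eq_zero _).1 h _ hsingle

theorem linearIndependent_adjoin_of_hironakaMap_injective
    (h : Function.Injective (hironakaMap K f g)) :
    LinearIndependent (Algebra.adjoin K (Set.range f)) g := by
  rw [Fintype.linearIndependent_iff]
  intro c hc j
  have hlift (j : κ) : ∃ F : MvPolynomial ι K, aeval f F = (c j : A) :=
    (Algebra.adjoin_range_eq_range_aeval K f).le (c j).2
  choose F hF using hlift
  have hF0 : F = 0 := by
    refine (injective_iff_map_eq_zero _).1 h F ?_
    simpa only [hironakaMap_apply, hF, Subalgebra.smul_def, smul_eq_mul] using hc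
  exact Subtype.ext (by rw [← hF, hF0, Pi.zero_apply, map_zero, ZeroMemClass.coe_zero])

theorem span_adjoin_eq_top_of_hironakaMap_surjective
    (h : Function.Surjective (hironakaMap K f g)) :
    Submodule.span (Algebra.adjoin K (Set.range f)) (Set.range g) = ⊤ := by
  refine eq_top_iff.2 fun p _ => ?_
  obtain ⟨F, rfl⟩ := h p
  rw [hironakaMap_apply]
  refine Submodule.sum_mem _ fun j _ => ?_
  have hmem : aeval f (F j) ∈ Algebra.adjoin K (Set.range f) :=
    (Algebra.adjoin_range_eq_range_aeval K f).ge ⟨F j, rfl⟩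
  exact Submodule.smul_mem _ (⟨_, hmem⟩ : Algebra.adjoin K (Set.range f))
    (Submodule.subset_span ⟨j, rfl⟩)

theorem exists_basis_adjoin_of_hironakaMap_bijective
    (h : Function.Bijective (hironakaMap K f g)) :
    ∃ b : Module.Basis κ (Algebra.adjoin K (Set.range f)) A, ∀ j, b j = g j :=
  ⟨.mk (linearIndependent_adjoin_of_hironakaMap_injective h.1)
    (span_adjoin_eq_top_of_hironakaMap_surjective h.2).ge, fun _ => Module.Basis.mk_apply ..⟩

theorem hironakaMap_bijective_of_map_eq {φ : A →ₐ[K] B} (hφ : Function.Injective φ)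
    {T : Subalgebra K B} {f' : ι → T} {g' : κ → T} (hf : ∀ i, (f' i : B) = φ (f i))
    (hg : ∀ j, (g' j : B) = φ (g j)) (hinj : Function.Injective (hironakaMap K f g))
    (hT : ∀ t ∈ T, ∃ F, φ (hironakaMap K f g F) = t) :
    Function.Bijective (hironakaMap K f' g') := by
  have hcomm (F : κ → MvPolynomial ι K) :
      (hironakaMap K f' g' F : B) = φ (hironakaMap K f g F) := by
    rw [← Subalgebra.coe_val, map_hironakaMap, map_hironakaMap]
    exact congrArg₂ (fun f g => hironakaMap K f g F) (funext hf) (funext hg)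
  refine ⟨fun F G hFG => hinj (hφ ?_), fun t => ?_⟩
  · rw [← hcomm, ← hcomm, hFG]
  · obtain ⟨F, hF⟩ := hT t t.2
    exact ⟨F, Subtype.ext ((hcomm F).trans hF)⟩

end HironakaDecomposition

section HironakaLeading

variable {n : ℕ} {R ι κ : Type*} [CommRing R] [IsDomain R]
  {f : ι → MvPolynomial (Fin n) R} {g : κ → MvPolynomial (Fin n) R} {u : ι → Fin n → ℕ}
  {v : κ → Fin n → ℕ}

theorem LexLeads.hironakaTerm {x : (_ : κ) × (ι →₀ ℕ)} (hf : ∀ i, x.2 i ≠ 0 → LexLeads (f i) (u i))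
    (hg : ∀ j, LexLeads (g j) (v j)) :
    LexLeads (hironakaTerm f g x) ((x.2.sum fun i e => e • u i) + v x.1) :=
  (LexLeads.prod fun i hi => (hf i (Finsupp.mem_support_iff.1 hi)).pow _).mul (hg x.1)

theorem linearIndepOn_hironakaTerm {s : Set ((_ : κ) × (ι →₀ ℕ))}
    (hf : ∀ x ∈ s, ∀ i, x.2 i ≠ 0 → LexLeads (f i) (u i)) (hg : ∀ j, LexLeads (g j) (v j))
    (hinj : s.InjOn fun x => (x.2.sum fun i e => e • u i) + v x.1) :
    LinearIndepOn R (hironakaTerm f g) s := by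
  refine linearIndepOn_of_degree_injOn MonomialOrder.lex
    (fun x hx => (LexLeads.hironakaTerm (hf x hx) hg).1.ne_zero) fun x hx y hy hxy => ?_
  refine hinj hx hy ?_
  have hdeg := congrArg DFunLike.coe hxy
  simpa only [(LexLeads.hironakaTerm (hf x hx) hg).2,
    (LexLeads.hironakaTerm (hf y hy) hg).2] using hdeg

end HironakaLeading

namespace SylowInvariants

/-- The primary invariants of `sylowSubgroup`. The last one is the product over the orbit of
`X 0`. -/
noncomputable def primary : Fin 6 → MvPolynomial (Fin 6) F2 :=
  ![X 1 + X 4,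
    X 4,
    orbitProd (X 3) (X 4),
    orbitProd (X 2) (X 1 + X 4),
    X 0 * X 4 + X 2 * X 3 + X 1 * X 5 + X 5 * (X 5 + X 4 + X 3),
    X 0 * (X 0 + X 2 + X 5) * (X 0 + X 1 + X 3) * (X 0 + X 1 + X 2 + X 3 + X 4 + X 5)]

/-- The first cubic secondary invariant. -/
noncomputable def cubic₁ : MvPolynomial (Fin 6) F2 :=
  X 2 * orbitProd (X 3) (X 4) +
    (X 1 + X 4) * (X 0 * X 4 + X 2 * X 3 + X 1 * X 5 + X 3 * X 5)

/-- The second cubic secondary invariant. -/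
noncomputable def cubic₂ : MvPolynomial (Fin 6) F2 :=
  X 0 ^ 2 * X 4 + X 0 * X 1 * X 4 + (X 1 + X 4) * X 3 * (X 2 + X 5) + X 2 ^ 2 * X 3 +
    X 2 * X 3 ^ 2 + X 3 ^ 2 * X 5 + X 3 * X 5 ^ 2

/-- The secondary invariants of `sylowSubgroup`. -/
noncomputable def secondary : Fin 4 → MvPolynomial (Fin 6) F2 :=
  ![1, cubic₁, cubic₂, cubic₁ * cubic₂]

section Reduction

/-- The substitution `e = 0`, with the remaining variables ordered as `a, f, d, c, b`. -/
noncomputable def killE : MvPolynomial (Fin 6) F2 →ₐ[F2] MvPolynomial (Fin 5) F2 :=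
  aeval ![X 0, X 4, X 3, X 2, 0, X 1]

/-- The substitution `e = b`, with the remaining variables ordered as `f, a, d, c, b`. -/
noncomputable def identifyBE : MvPolynomial (Fin 6) F2 →ₐ[F2] MvPolynomial (Fin 5) F2 :=
  aeval ![X 1, X 4, X 3, X 2, X 4, X 0]

theorem lexLeads_killE_primary_five : LexLeads (killE (primary 5)) ![4, 0, 0, 0, 0] := by
  have h₀ : LexLeads (X 0 : MvPolynomial (Fin 5) F2) ![1, 0, 0, 0, 0] :=
    .of_prod_add_sum _ [] (by decide) (by simp [Fin.prod_univ_five])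
  have h₁ : LexLeads (X 0 + X 3 + X 1 : MvPolynomial (Fin 5) F2) ![1, 0, 0, 0, 0] :=
    .of_prod_add_sum _ [![0, 0, 0, 1, 0], ![0, 1, 0, 0, 0]] (by decide)
      (by simp [Fin.prod_univ_five, add_assoc])
  have h₂ : LexLeads (X 0 + X 4 + X 2 : MvPolynomial (Fin 5) F2) ![1, 0, 0, 0, 0] :=
    .of_prod_add_sum _ [![0, 0, 0, 0, 1], ![0, 0, 1, 0, 0]] (by decide)
      (by simp [Fin.prod_univ_five, add_assoc])
  have h₃ : LexLeads (X 0 + X 4 + X 3 + X 2 + X 1 : MvPolynomial (Fin 5) F2) ![1, 0, 0, 0, 0] :=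
    .of_prod_add_sum _
      [![0, 0, 0, 0, 1], ![0, 0, 0, 1, 0], ![0, 0, 1, 0, 0], ![0, 1, 0, 0, 0]] (by decide)
      (by simp [Fin.prod_univ_five, add_assoc])
  convert ((h₀.mul h₁).mul h₂).mul h₃ using 1
  · simp [killE, primary]
  · decide

theorem lexLeads_killE_primary : ∀ i : Fin 6, i ≠ 1 → LexLeads (killE (primary i))
    (![![0, 0, 0, 0, 1], 0, ![0, 0, 2, 0, 0], ![0, 0, 0, 2, 0], ![0, 2, 0, 0, 0],
      ![4, 0, 0, 0, 0]] i) := by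
  intro i hi
  fin_cases i
  · refine .of_prod_add_sum _ [] (by decide) ?_
    simp [Fin.prod_univ_five, killE, primary]
  · exact absurd rfl hi
  · refine .of_prod_add_sum _ [] (by decide) ?_
    simp [Fin.prod_univ_five, killE, primary, orbitProd, sq]
  · refine .of_prod_add_sum _ [![0, 0, 0, 1, 1]] (by decide) ?_
    simp only [killE, primary, orbitProd, map_add, map_mul, aeval_X, Fin.reduceFinMk,
      Matrix.cons_val, Fin.prod_univ_five, List.map_cons, List.map_nil, List.sum_cons, List.sum_nil]
    ring
  · refine .of_prod_add_sum _ [![0, 1, 1, 0, 0], ![0, 1, 0, 0, 1], ![0, 0, 1, 1, 0]]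
      (by decide) ?_
    simp only [killE, primary, map_add, map_mul, aeval_X, Fin.reduceFinMk, Matrix.cons_val,
      Fin.prod_univ_five, List.map_cons, List.map_nil, List.sum_cons, List.sum_nil]
    ring
  · exact lexLeads_killE_primary_five

theorem lexLeads_killE_cubic₁ : LexLeads (killE cubic₁) ![0, 1, 1, 0, 1] := by
  refine .of_prod_add_sum _ [![0, 1, 0, 0, 2], ![0, 0, 2, 1, 0], ![0, 0, 1, 1, 1]]
    (by decide) ?_
  simp only [killE, cubic₁, orbitProd, map_add, map_mul, aeval_X, Matrix.cons_val,
    Fin.prod_univ_five, List.map_cons, List.map_nil, List.sum_cons, List.sum_nil]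
  ring

theorem lexLeads_killE_cubic₂ : LexLeads (killE cubic₂) ![0, 2, 1, 0, 0] := by
  refine .of_prod_add_sum _ [![0, 0, 1, 1, 1], ![0, 1, 1, 0, 1], ![0, 0, 1, 2, 0],
    ![0, 0, 2, 1, 0], ![0, 1, 2, 0, 0]] (by decide) ?_
  simp only [killE, cubic₂, map_add, map_mul, map_pow, aeval_X, Matrix.cons_val, Fin.prod_univ_five,
    List.map_cons, List.map_nil, List.sum_cons, List.sum_nil]
  ring

theorem lexLeads_killE_secondary (j : Fin 4) : LexLeads (killE (secondary j))
    (![0, ![0, 1, 1, 0, 1], ![0, 2, 1, 0, 0], ![0, 3, 2, 0, 1]] j) := by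
  fin_cases j
  · simpa [secondary] using! LexLeads.one
  · exact lexLeads_killE_cubic₁
  · exact lexLeads_killE_cubic₂
  · convert lexLeads_killE_cubic₁.mul lexLeads_killE_cubic₂ using 1
    · simp [secondary]
    · decide

theorem lexLeads_identifyBE_primary_five : LexLeads (identifyBE (primary 5)) ![2, 2, 0, 0, 0] := by
  have h₀ : LexLeads (X 1 : MvPolynomial (Fin 5) F2) ![0, 1, 0, 0, 0] :=
    .of_prod_add_sum _ [] (by decide) (by simp [Fin.prod_univ_five])
  have h₁ : LexLeads (X 0 + X 1 + X 3 : MvPolynomial (Fin 5) F2) ![1, 0, 0, 0, 0] :=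
    .of_prod_add_sum _ [![0, 1, 0, 0, 0], ![0, 0, 0, 1, 0]] (by decide)
      (by simp [Fin.prod_univ_five, add_assoc])
  have h₂ : LexLeads (X 1 + X 2 + X 4 : MvPolynomial (Fin 5) F2) ![0, 1, 0, 0, 0] :=
    .of_prod_add_sum _ [![0, 0, 1, 0, 0], ![0, 0, 0, 0, 1]] (by decide)
      (by simp [Fin.prod_univ_five, add_assoc])
  have h₃ : LexLeads (X 0 + X 1 + X 2 + X 3 : MvPolynomial (Fin 5) F2) ![1, 0, 0, 0, 0] :=
    .of_prod_add_sum _ [![0, 1, 0, 0, 0], ![0, 0, 1, 0, 0], ![0, 0, 0, 1, 0]] (by decide)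
      (by simp [Fin.prod_univ_five, add_assoc])
  convert ((h₀.mul h₁).mul h₂).mul h₃ using 1
  · simp only [identifyBE, primary, map_add, map_mul, aeval_X, Matrix.cons_val]
    linear_combination X 4 * (X 1 * (X 0 + X 1 + X 3) * (X 1 + X 2 + X 4)) *
      CharTwo.two_eq_zero (R := MvPolynomial (Fin 5) F2)
  · decide

theorem lexLeads_identifyBE_primary : ∀ i : Fin 6, i ≠ 0 → LexLeads (identifyBE (primary i))
    (![0, ![0, 0, 0, 0, 1], ![0, 0, 2, 0, 0], ![0, 0, 0, 2, 0], ![2, 0, 0, 0, 0],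
      ![2, 2, 0, 0, 0]] i) := by
  intro i hi
  fin_cases i
  · exact absurd rfl hi
  · refine .of_prod_add_sum _ [] (by decide) ?_
    simp [Fin.prod_univ_five, identifyBE, primary]
  · refine .of_prod_add_sum _ [![0, 0, 1, 0, 1]] (by decide) ?_
    simp only [identifyBE, primary, orbitProd, map_add, map_mul, aeval_X, Fin.reduceFinMk,
      Matrix.cons_val, Fin.prod_univ_five, List.map_cons, List.map_nil, List.sum_cons, List.sum_nil]
    ring
  · refine .of_prod_add_sum _ [] (by decide) ?_
    simp [Fin.prod_univ_five, identifyBE, primary, orbitProd,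
      CharTwo.add_self_eq_zero, sq]
  · refine .of_prod_add_sum _ [![1, 0, 1, 0, 0], ![0, 1, 0, 0, 1], ![0, 0, 1, 1, 0]]
      (by decide) ?_
    simp only [identifyBE, primary, map_add, map_mul, aeval_X, Fin.reduceFinMk, Matrix.cons_val,
      Fin.prod_univ_five, List.map_cons, List.map_nil, List.sum_cons, List.sum_nil]
    linear_combination X 4 * X 0 * CharTwo.two_eq_zero (R := MvPolynomial (Fin 5) F2)
  · exact lexLeads_identifyBE_primary_five

theorem lexLeads_identifyBE_cubic₁ : LexLeads (identifyBE cubic₁) ![0, 0, 2, 1, 0] := by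
  refine .of_prod_add_sum _ [![0, 0, 1, 1, 1]] (by decide) ?_
  simp only [identifyBE, cubic₁, orbitProd, CharTwo.add_self_eq_zero, map_add, map_mul, aeval_X,
    Matrix.cons_val, Fin.prod_univ_five, List.map_cons, List.map_nil, List.sum_cons, List.sum_nil]
  ring

theorem lexLeads_identifyBE_cubic₂ : LexLeads (identifyBE cubic₂) ![2, 0, 1, 0, 0] := by
  refine .of_prod_add_sum _ [![1, 0, 2, 0, 0], ![0, 2, 0, 0, 1], ![0, 1, 0, 0, 2],
    ![0, 0, 1, 2, 0], ![0, 0, 2, 1, 0]] (by decide) ?_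
  simp only [identifyBE, cubic₂, CharTwo.add_self_eq_zero, map_add, map_mul, map_pow, aeval_X,
    Matrix.cons_val, Fin.prod_univ_five, List.map_cons, List.map_nil, List.sum_cons, List.sum_nil]
  ring

theorem lexLeads_identifyBE_secondary (j : Fin 4) : LexLeads (identifyBE (secondary j))
    (![0, ![0, 0, 2, 1, 0], ![2, 0, 1, 0, 0], ![2, 0, 3, 1, 0]] j) := by
  fin_cases j
  · simpa [secondary] using! LexLeads.one
  · exact lexLeads_identifyBE_cubic₁
  · exact lexLeads_identifyBE_cubic₂
  · convert lexLeads_identifyBE_cubic₁.mul lexLeads_identifyBE_cubic₂ using 1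
    · simp [secondary]
    · decide

theorem linearIndepOn_hironakaTerm_killE :
    LinearIndepOn F2 (hironakaTerm (killE ∘ primary) (killE ∘ secondary)) {x | x.2 1 = 0} := by
  refine linearIndepOn_hironakaTerm (fun x hx i hi => lexLeads_killE_primary i ?_)
    lexLeads_killE_secondary ?_
  · rintro rfl
    exact hi hx
  · rintro ⟨j, α⟩ hα ⟨j', β⟩ hβ h
    simp only [Finsupp.sum_fintype, zero_smul, implies_true, Fin.sum_univ_six, funext_iff,
      Fin.forall_fin_succ] at h
    -- The parities of the exponents of `f` and `d` determine `j`.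
    have hαj : (∀ i, α i = β i) ∧ j = j' := by
      fin_cases j <;> fin_cases j' <;> simp [Fin.forall_fin_succ] at h hα hβ ⊢ <;> omega
    rw [Finsupp.ext hαj.1, hαj.2]

theorem linearIndepOn_hironakaTerm_identifyBE :
    LinearIndepOn F2 (hironakaTerm (identifyBE ∘ primary) (identifyBE ∘ secondary))
      {x | x.2 0 = 0} := by
  refine linearIndepOn_hironakaTerm (fun x hx i hi => lexLeads_identifyBE_primary i ?_)
    lexLeads_identifyBE_secondary ?_
  · rintro rfl
    exact hi hx
  · rintro ⟨j, α⟩ hα ⟨j', β⟩ hβ h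
    simp only [Finsupp.sum_fintype, zero_smul, implies_true, Fin.sum_univ_six, funext_iff,
      Fin.forall_fin_succ] at h
    -- The parities of the exponents of `d` and `c` determine `j`.
    have hαj : (∀ i, α i = β i) ∧ j = j' := by
      fin_cases j <;> fin_cases j' <;> simp [Fin.forall_fin_succ] at h hα hβ ⊢ <;> omega
    rw [Finsupp.ext hαj.1, hαj.2]

theorem primary_zero_ne_zero : primary 0 ≠ 0 := by
  intro h
  have := congrArg (eval (Pi.single 1 1)) h
  simp [primary] at this

theorem mem_range_hironakaMap_of_primary_zero_pow_mul_mem {p : MvPolynomial (Fin 6) F2} (n : ℕ)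
    (hp : primary 0 ^ n * p ∈ Set.range (hironakaMap F2 primary secondary)) :
    p ∈ Set.range (hironakaMap F2 primary secondary) :=
  mem_range_hironakaMap_of_pow_mul_mem primary_zero_ne_zero
    (fun _ => X_dvd_of_dvd_hironakaMap identifyBE
      (by simp [identifyBE, primary, CharTwo.add_self_eq_zero])
      linearIndepOn_hironakaTerm_identifyBE) n hp

theorem X_one_dvd_of_primary_one_dvd_hironakaMap (F : Fin 4 → MvPolynomial (Fin 6) F2)
    (hF : primary 1 ∣ hironakaMap F2 primary secondary F) (j : Fin 4) : X 1 ∣ F j :=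
  X_dvd_of_dvd_hironakaMap killE (by simp [killE, primary]) linearIndepOn_hironakaTerm_killE hF j

theorem mem_range_hironakaMap_of_primary_one_pow_mul_mem {p : MvPolynomial (Fin 6) F2} (n : ℕ)
    (hp : primary 1 ^ n * p ∈ Set.range (hironakaMap F2 primary secondary)) :
    p ∈ Set.range (hironakaMap F2 primary secondary) :=
  mem_range_hironakaMap_of_pow_mul_mem (X_ne_zero 4) X_one_dvd_of_primary_one_dvd_hironakaMap n hp

theorem hironakaMap_primary_secondary_injective :
    Function.Injective (hironakaMap F2 primary secondary) :=
  hironakaMap_injective_of_dvd (i := 1) (X_ne_zero 4) X_one_dvd_of_primary_one_dvd_hironakaMap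

end Reduction

section Relations

theorem cubic₁_sq : cubic₁ ^ 2 =
    (primary 0 ^ 3 + primary 0 * primary 2 + primary 0 ^ 2 * primary 1) * cubic₁ +
      (primary 0 ^ 2 * primary 1 * cubic₂ + primary 0 ^ 4 * primary 4 +
        primary 0 ^ 2 * primary 2 * primary 4 + primary 2 ^ 2 * primary 3 +
        primary 0 ^ 2 * primary 2 * primary 3 + primary 0 ^ 2 * primary 1 ^ 2 * primary 4) := by
  have := CharTwo.two_eq_zero (R := MvPolynomial (Fin 6) F2)
  simp only [primary, cubic₁, cubic₂, orbitProd, Matrix.cons_val]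
  grind

theorem cubic₂_sq : cubic₂ ^ 2 = (primary 1 * primary 4 + primary 1 * primary 3) * cubic₂ +
    (primary 2 * primary 3 ^ 2 + primary 2 * primary 4 ^ 2 + primary 1 ^ 2 * primary 5) := by
  have := CharTwo.two_eq_zero (R := MvPolynomial (Fin 6) F2)
  simp only [primary, cubic₂, orbitProd, Matrix.cons_val]
  grind

end Relations

section Invariants

/-- The action of the transvection `A` on the polynomial ring. -/
noncomputable def actA : MvPolynomial (Fin 6) F2 →ₐ[F2] MvPolynomial (Fin 6) F2 :=
  aeval ![X 0 + X 2 + X 5, X 1, X 2, X 3 + X 4, X 4, X 5]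

theorem actA_X (i : Fin 6) :
    actA (X i) = (![X 0 + X 2 + X 5, X 1, X 2, X 3 + X 4, X 4, X 5] : Fin 6 → _) i :=
  aeval_X _ _

/-- The action of the transvection `T = B² A B` on the polynomial ring. -/
noncomputable def actT : MvPolynomial (Fin 6) F2 →ₐ[F2] MvPolynomial (Fin 6) F2 :=
  aeval ![X 0, X 1, X 1 + X 2 + X 4, X 3, X 4, X 3 + X 5]

theorem actT_X (i : Fin 6) :
    actT (X i) = (![X 0, X 1, X 1 + X 2 + X 4, X 3, X 4, X 3 + X 5] : Fin 6 → _) i :=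
  aeval_X _ _

/-- The action of the commutator `(A T)²` of the involutions `A` and `T` on the polynomial ring. -/
noncomputable def actZ : MvPolynomial (Fin 6) F2 →ₐ[F2] MvPolynomial (Fin 6) F2 :=
  aeval ![X 0 + X 1 + X 3, X 1, X 2, X 3, X 4, X 4 + X 5]

theorem actZ_X (i : Fin 6) :
    actZ (X i) = (![X 0 + X 1 + X 3, X 1, X 2, X 3, X 4, X 4 + X 5] : Fin 6 → _) i :=
  aeval_X _ _

/-- The polynomials fixed by both transvections `A` and `T`. -/
noncomputable def transvectionInvariants : Subalgebra F2 (MvPolynomial (Fin 6) F2) :=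
  AlgHom.equalizer actA (AlgHom.id F2 _) ⊓ AlgHom.equalizer actT (AlgHom.id F2 _)

theorem mem_transvectionInvariants {p : MvPolynomial (Fin 6) F2} :
    p ∈ transvectionInvariants ↔ actA p = p ∧ actT p = p :=
  Iff.rfl

theorem actT_comp_actA_comp_actT_comp_actA :
    actT.comp (actA.comp (actT.comp actA)) = actZ := by
  have := CharTwo.two_eq_zero (R := MvPolynomial (Fin 6) F2)
  refine algHom_ext fun i => ?_
  fin_cases i <;> simp only [AlgHom.comp_apply, map_add, actA_X, actT_X, actZ_X, Fin.reduceFinMk,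
    Matrix.cons_val] <;> grind

theorem actZ_eq_of_mem_transvectionInvariants {p : MvPolynomial (Fin 6) F2}
    (hp : p ∈ transvectionInvariants) : actZ p = p := by
  simp only [← actT_comp_actA_comp_actT_comp_actA, AlgHom.comp_apply,
    (mem_transvectionInvariants.1 hp).1, (mem_transvectionInvariants.1 hp).2]

theorem primary_mem_transvectionInvariants (i : Fin 6) : primary i ∈ transvectionInvariants := by
  have := CharTwo.two_eq_zero (R := MvPolynomial (Fin 6) F2)
  rw [mem_transvectionInvariants]
  fin_cases i <;> constructor <;> simp only [primary, orbitProd, map_add, map_mul, actA_X, actT_X,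
    Fin.reduceFinMk, Matrix.cons_val] <;> grind

theorem cubic₁_mem_transvectionInvariants : cubic₁ ∈ transvectionInvariants := by
  have := CharTwo.two_eq_zero (R := MvPolynomial (Fin 6) F2)
  rw [mem_transvectionInvariants]
  constructor <;> simp only [cubic₁, orbitProd, map_add, map_mul, actA_X, actT_X,
    Matrix.cons_val] <;> grind

theorem cubic₂_mem_transvectionInvariants : cubic₂ ∈ transvectionInvariants := by
  have := CharTwo.two_eq_zero (R := MvPolynomial (Fin 6) F2)
  rw [mem_transvectionInvariants]
  constructor <;> simp only [cubic₂, map_add, map_mul, map_pow, actA_X, actT_X,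
    Matrix.cons_val] <;> grind

theorem secondary_mem_transvectionInvariants (j : Fin 4) :
    secondary j ∈ transvectionInvariants := by
  fin_cases j
  exacts [one_mem _, cubic₁_mem_transvectionInvariants, cubic₂_mem_transvectionInvariants,
    mul_mem cubic₁_mem_transvectionInvariants cubic₂_mem_transvectionInvariants]

theorem isHomogeneous_primary (i : Fin 6) :
    (primary i).IsHomogeneous (![1, 1, 2, 2, 2, 4] i) := by
  have hX (i : Fin 6) : (X i : MvPolynomial (Fin 6) F2).IsHomogeneous 1 := isHomogeneous_X _ _
  fin_cases i
  · exact (hX 1).add (hX 4)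
  · exact hX 4
  · exact (hX 3).mul ((hX 3).add (hX 4))
  · exact (hX 2).mul ((hX 2).add ((hX 1).add (hX 4)))
  · exact ((((hX 0).mul (hX 4)).add ((hX 2).mul (hX 3))).add ((hX 1).mul (hX 5))).add
      ((hX 5).mul (((hX 5).add (hX 4)).add (hX 3)))
  · exact (((hX 0).mul (((hX 0).add (hX 2)).add (hX 5))).mul (((hX 0).add (hX 1)).add (hX 3))).mul
      ((((((hX 0).add (hX 1)).add (hX 2)).add (hX 3)).add (hX 4)).add (hX 5))

theorem isHomogeneous_cubic₁ : cubic₁.IsHomogeneous 3 := by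
  have hX (i : Fin 6) : (X i : MvPolynomial (Fin 6) F2).IsHomogeneous 1 := isHomogeneous_X _ _
  exact ((hX 2).mul ((hX 3).mul ((hX 3).add (hX 4)))).add
    (((hX 1).add (hX 4)).mul (((((hX 0).mul (hX 4)).add ((hX 2).mul (hX 3))).add
      ((hX 1).mul (hX 5))).add ((hX 3).mul (hX 5))))

theorem isHomogeneous_cubic₂ : cubic₂.IsHomogeneous 3 := by
  have hX (i : Fin 6) : (X i : MvPolynomial (Fin 6) F2).IsHomogeneous 1 := isHomogeneous_X _ _
  exact (((((((hX 0).pow 2).mul (hX 4)).add (((hX 0).mul (hX 1)).mul (hX 4))).add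
    ((((hX 1).add (hX 4)).mul (hX 3)).mul ((hX 2).add (hX 5)))).add
    (((hX 2).pow 2).mul (hX 3))).add ((hX 2).mul ((hX 3).pow 2))).add
    (((hX 3).pow 2).mul (hX 5)) |>.add ((hX 3).mul ((hX 5).pow 2))

theorem isHomogeneous_secondary (j : Fin 4) : (secondary j).IsHomogeneous (![0, 3, 3, 6] j) := by
  fin_cases j
  exacts [isHomogeneous_one _ _, isHomogeneous_cubic₁, isHomogeneous_cubic₂,
    isHomogeneous_cubic₁.mul isHomogeneous_cubic₂]

end Invariants

section Descent

theorem exists_primary_one_pow_mul_mem_adjoin (p : MvPolynomial (Fin 6) F2) :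
    ∃ n : ℕ, primary 1 ^ n * p ∈
      Algebra.adjoin F2 (Set.range ![primary 4, X 1, X 2, X 3, X 4, X 5]) := by
  have hmem (i : Fin 6) := Algebra.subset_adjoin (R := F2)
    (Set.mem_range_self (f := ![primary 4, X 1, X 2, X 3, X 4, X 5]) i)
  have hp : p ∈ Algebra.adjoin F2 (Set.range X) := by
    rw [adjoin_range_X]
    exact Algebra.mem_top
  refine exists_pow_mul_mem_adjoin_range (i := 0) hp (by simp [Fin.forall_fin_succ]) (hmem 4) ?_
  have h : primary 1 * X 0 = primary 4 - X 2 * X 3 - X 1 * X 5 - X 5 * (X 5 + X 4 + X 3) := by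
    simp only [primary, Matrix.cons_val]
    ring
  change primary 1 * X 0 ∈ _
  rw [h]
  exact sub_mem (sub_mem (sub_mem (hmem 0) (mul_mem (hmem 2) (hmem 3))) (mul_mem (hmem 1) (hmem 5)))
    (mul_mem (hmem 5) (add_mem (add_mem (hmem 5) (hmem 4)) (hmem 3)))

theorem mem_adjoin_of_actZ_eq {p : MvPolynomial (Fin 6) F2}
    (hp : p ∈ Algebra.adjoin F2 (Set.range ![primary 4, X 1, X 2, X 3, X 4, X 5]))
    (hZ : actZ p = p) :
    p ∈ Algebra.adjoin F2
      (Set.range ![primary 4, X 1, X 2, X 3, X 4, orbitProd (X 5) (X 4)]) := by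
  have h₄ := actZ_eq_of_mem_transvectionInvariants (primary_mem_transvectionInvariants 4)
  refine mem_adjoin_range_of_apply_eq (i := 5) hp hZ (by simp [Fin.forall_fin_succ]) rfl
    (Algebra.subset_adjoin ⟨4, rfl⟩) (X_ne_zero 4) (by simp [actZ_X])
    (by simp [actZ_X, add_comm]) ?_
  simp [Fin.forall_fin_succ, actZ_X, h₄]

theorem mem_adjoin_of_actA_eq {p : MvPolynomial (Fin 6) F2}
    (hp : p ∈ Algebra.adjoin F2
      (Set.range ![primary 4, X 1, X 2, X 3, X 4, orbitProd (X 5) (X 4)]))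
    (hA : actA p = p) :
    p ∈ Algebra.adjoin F2
      (Set.range ![primary 4, X 1, X 2, primary 2, X 4, orbitProd (X 5) (X 4)]) := by
  have h₄ : actA (primary 4) = primary 4 := (primary_mem_transvectionInvariants 4).1
  refine mem_adjoin_range_of_apply_eq (i := 3) hp hA (by simp [Fin.forall_fin_succ]) rfl
    (Algebra.subset_adjoin ⟨4, rfl⟩) (X_ne_zero 4) (by simp [actA_X]) (by simp [actA_X]) ?_
  simp [Fin.forall_fin_succ, actA_X, map_orbitProd, h₄]

theorem exists_primary_zero_pow_mul_mem_adjoin {p : MvPolynomial (Fin 6) F2}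
    (hp : p ∈ Algebra.adjoin F2
      (Set.range ![primary 4, X 1, X 2, primary 2, X 4, orbitProd (X 5) (X 4)])) :
    ∃ n : ℕ, primary 0 ^ n * p ∈ Algebra.adjoin F2
      (Set.range ![primary 4, X 1, X 2, primary 2, X 4, cubic₁]) := by
  have hmem (i : Fin 6) := Algebra.subset_adjoin (R := F2)
    (Set.mem_range_self (f := ![primary 4, X 1, X 2, primary 2, X 4, cubic₁]) i)
  refine exists_pow_mul_mem_adjoin_range (i := 5) hp (by simp [Fin.forall_fin_succ])
    (add_mem (hmem 1) (hmem 4)) ?_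
  have h : primary 0 * orbitProd (X 5) (X 4) =
      cubic₁ + primary 0 * primary 4 + X 2 * primary 2 := by
    have := CharTwo.two_eq_zero (R := MvPolynomial (Fin 6) F2)
    simp only [primary, cubic₁, orbitProd, Matrix.cons_val]
    grind
  change primary 0 * orbitProd (X 5) (X 4) ∈ _
  rw [h]
  exact add_mem (add_mem (hmem 5) (mul_mem (add_mem (hmem 1) (hmem 4)) (hmem 0)))
    (mul_mem (hmem 2) (hmem 3))

theorem mem_adjoin_of_actT_eq {p : MvPolynomial (Fin 6) F2}
    (hp : p ∈ Algebra.adjoin F2 (Set.range ![primary 4, X 1, X 2, primary 2, X 4, cubic₁]))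
    (hT : actT p = p) :
    p ∈ Algebra.adjoin F2
      (Set.range ![primary 4, X 1, primary 3, primary 2, X 4, cubic₁]) := by
  have hprimary (i : Fin 6) : actT (primary i) = primary i :=
    (primary_mem_transvectionInvariants i).2
  have hcubic₁ : actT cubic₁ = cubic₁ := cubic₁_mem_transvectionInvariants.2
  refine mem_adjoin_range_of_apply_eq (i := 2) hp hT (by simp [Fin.forall_fin_succ]) rfl
    (add_mem (Algebra.subset_adjoin ⟨1, rfl⟩) (Algebra.subset_adjoin ⟨4, rfl⟩))
    primary_zero_ne_zero (hprimary 0) ?_ ?_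
  · simp only [actT_X, primary, Matrix.cons_val]
    ring
  · simp [Fin.forall_fin_succ, actT_X, hprimary, hcubic₁]

theorem exists_eq_aeval_primary_add_mul_cubic₂ {p : MvPolynomial (Fin 6) F2}
    (hp : p ∈ Algebra.adjoin F2 (insert cubic₂ (Set.range primary))) :
    ∃ F G : MvPolynomial (Fin 6) F2, p = aeval primary F + aeval primary G * cubic₂ := by
  have hmem (i : Fin 6) : primary i ∈ Algebra.adjoin F2 (Set.range primary) :=
    Algebra.subset_adjoin ⟨i, rfl⟩
  obtain ⟨α, hα, β, hβ, rfl⟩ := exists_eq_add_mul_of_mem_adjoin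
    (B := Algebra.adjoin F2 (Set.range primary))
    (add_mem (mul_mem (hmem 1) (hmem 4)) (mul_mem (hmem 1) (hmem 3)))
    (add_mem (add_mem (mul_mem (hmem 2) (pow_mem (hmem 3) 2))
      (mul_mem (hmem 2) (pow_mem (hmem 4) 2))) (mul_mem (pow_mem (hmem 1) 2) (hmem 5)))
    cubic₂_sq (Set.insert_subset_insert Algebra.subset_adjoin) hp
  rw [Algebra.adjoin_range_eq_range_aeval] at hα hβ
  obtain ⟨F, rfl⟩ := hα
  obtain ⟨G, rfl⟩ := hβ
  exact ⟨F, G, rfl⟩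

theorem mem_range_hironakaMap_of_mem_adjoin {p : MvPolynomial (Fin 6) F2}
    (hp : p ∈ Algebra.adjoin F2 (insert cubic₁ (insert cubic₂ (Set.range primary)))) :
    p ∈ Set.range (hironakaMap F2 primary secondary) := by
  have hcubic₂ : cubic₂ ∈ Algebra.adjoin F2 (insert cubic₂ (Set.range primary)) :=
    Algebra.subset_adjoin (Set.mem_insert _ _)
  have hmem (i : Fin 6) : primary i ∈ Algebra.adjoin F2 (insert cubic₂ (Set.range primary)) :=
    Algebra.subset_adjoin (Set.mem_insert_of_mem _ ⟨i, rfl⟩)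
  obtain ⟨α, hα, β, hβ, rfl⟩ := exists_eq_add_mul_of_mem_adjoin
    (B := Algebra.adjoin F2 (insert cubic₂ (Set.range primary)))
    (add_mem (add_mem (pow_mem (hmem 0) 3) (mul_mem (hmem 0) (hmem 2)))
      (mul_mem (pow_mem (hmem 0) 2) (hmem 1)))
    (add_mem (add_mem (add_mem (add_mem (add_mem
      (mul_mem (mul_mem (pow_mem (hmem 0) 2) (hmem 1)) hcubic₂)
      (mul_mem (pow_mem (hmem 0) 4) (hmem 4)))
      (mul_mem (mul_mem (pow_mem (hmem 0) 2) (hmem 2)) (hmem 4)))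
      (mul_mem (pow_mem (hmem 2) 2) (hmem 3)))
      (mul_mem (mul_mem (pow_mem (hmem 0) 2) (hmem 2)) (hmem 3)))
      (mul_mem (mul_mem (pow_mem (hmem 0) 2) (pow_mem (hmem 1) 2)) (hmem 4)))
    cubic₁_sq (Set.insert_subset_insert Algebra.subset_adjoin) hp
  obtain ⟨F₁, F₂, rfl⟩ := exists_eq_aeval_primary_add_mul_cubic₂ hα
  obtain ⟨G₁, G₂, rfl⟩ := exists_eq_aeval_primary_add_mul_cubic₂ hβ
  refine ⟨![F₁, G₁, F₂, G₂], ?_⟩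
  simp only [hironakaMap_apply, secondary, Fin.sum_univ_four, Matrix.cons_val]
  ring

theorem mem_range_hironakaMap_of_mem_transvectionInvariants {p : MvPolynomial (Fin 6) F2}
    (hp : p ∈ transvectionInvariants) : p ∈ Set.range (hironakaMap F2 primary secondary) := by
  obtain ⟨m, hm⟩ := exists_primary_one_pow_mul_mem_adjoin p
  have hpm : primary 1 ^ m * p ∈ transvectionInvariants :=
    mul_mem (pow_mem (primary_mem_transvectionInvariants 1) m) hp
  obtain ⟨n, hn⟩ := exists_primary_zero_pow_mul_mem_adjoin
    (mem_adjoin_of_actA_eq (mem_adjoin_of_actZ_eq hm (actZ_eq_of_mem_transvectionInvariants hpm))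
      hpm.1)
  have hpn : primary 0 ^ n * (primary 1 ^ m * p) ∈ transvectionInvariants :=
    mul_mem (pow_mem (primary_mem_transvectionInvariants 0) n) hpm
  refine mem_range_hironakaMap_of_primary_one_pow_mul_mem m
    (mem_range_hironakaMap_of_primary_zero_pow_mul_mem n
      (mem_range_hironakaMap_of_mem_adjoin
        (Algebra.adjoin_le ?_ (mem_adjoin_of_actT_eq hn hpn.2))))
  have hprimary (i : Fin 6) : primary i ∈
      Algebra.adjoin F2 (insert cubic₁ (insert cubic₂ (Set.range primary))) :=
    Algebra.subset_adjoin (.inr (.inr ⟨i, rfl⟩))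
  have hX : X 1 = primary 0 - primary 1 := (add_sub_cancel_right _ _).symm
  rintro _ ⟨i, rfl⟩
  fin_cases i
  exacts [hprimary 4, hX ▸ sub_mem (hprimary 0) (hprimary 1), hprimary 3, hprimary 2, hprimary 1,
    Algebra.subset_adjoin (.inl rfl)]

end Descent

section SylowSubgroup

open scoped Pointwise

/-- The elements of a Sylow `2`-subgroup of `GL₃(𝔽₂)` containing the generator `A`. -/
def unipotent (x y z : F2) : G3 :=
  ⟨!![1, x, y; 0, 1, 0; 0, z, 1], !![1, x + y * z, y; 0, 1, 0; 0, z, 1],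
    by revert x y z; decide, by revert x y z; decide⟩

theorem unipotent_mul (x y z x' y' z' : F2) :
    unipotent x y z * unipotent x' y' z' = unipotent (x + x' + y * z') (y + y') (z + z') := by
  apply Units.ext
  ext i j
  fin_cases i <;> fin_cases j <;>
    simp [unipotent, Matrix.mul_apply, Fin.sum_univ_three, add_comm]

theorem unipotent_zero : unipotent 0 0 0 = 1 := by
  decide

theorem unipotent_zero_one_zero : unipotent 0 1 0 = Agen := by
  decide

theorem unipotent_zero_zero_one : unipotent 0 0 1 = Bgen * Bgen * Agen * Bgen := by
  decide

theorem unipotent_injective :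
    Function.Injective fun t : F2 × F2 × F2 => unipotent t.1 t.2.1 t.2.2 := by
  decide

/-- The Sylow `2`-subgroup of `GL₃(𝔽₂)` that stabilises the flag `⟨e₁⟩ ⊂ ⟨e₁, e₃⟩` of column
vectors. -/
def sylowSubgroup : Subgroup G3 where
  carrier := Set.range fun t : F2 × F2 × F2 => unipotent t.1 t.2.1 t.2.2
  mul_mem' := by
    rintro _ _ ⟨s, rfl⟩ ⟨t, rfl⟩
    exact ⟨(s.1 + t.1 + s.2.1 * t.2.2, s.2.1 + t.2.1, s.2.2 + t.2.2),
      (unipotent_mul _ _ _ _ _ _).symm⟩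
  one_mem' := ⟨0, unipotent_zero⟩
  inv_mem' := by
    rintro _ ⟨⟨x, y, z⟩, rfl⟩
    exact ⟨(x + y * z, y, z), by revert x y z; decide⟩

theorem card_sylowSubgroup : Nat.card sylowSubgroup = 8 := by
  refine (Nat.card_range_of_injective unipotent_injective).trans ?_
  simp

theorem card_sylow (P : Sylow 2 G3) : Nat.card (P : Subgroup G3) = 8 := by
  have hcard : Nat.card G3 = 168 := by
    rw [Matrix.card_GL_field]
    simp [Fin.prod_univ_three, ZMod.card]
  have hfactorization : Nat.factorization 168 2 = 3 := by
    rw [show 168 = 2 ^ 3 * 21 by norm_num,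
      Nat.factorization_eq_of_coprime_left (by norm_num) (by simp), Nat.prime_two.factorization_pow,
      Finsupp.single_eq_same]
  rw [P.card_eq_multiplicity, hcard, hfactorization]
  norm_num

theorem exists_eq_conj_smul_sylowSubgroup (P : Sylow 2 G3) :
    ∃ γ : G3, (P : Subgroup G3) = MulAut.conj γ • sylowSubgroup := by
  have hcard : Nat.card sylowSubgroup = 2 ^ (Nat.card G3).factorization 2 := by
    rw [card_sylowSubgroup, ← P.card_eq_multiplicity, card_sylow]
  obtain ⟨γ, rfl⟩ := MulAction.exists_smul_eq G3 (Sylow.ofCard sylowSubgroup hcard) P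
  exact ⟨γ, rfl⟩

end SylowSubgroup

section Action

open scoped Pointwise

variable (D : G3 →* GL (Fin 6) F2)

theorem polyAct_mul_apply (σ τ : G3) (p : MvPolynomial (Fin 6) F2) :
    polyAct D (σ * τ) p = polyAct D τ (polyAct D σ p) := by
  have hcomp : polyAct D (σ * τ) = (polyAct D τ).comp (polyAct D σ) := by
    refine algHom_ext fun i => ?_
    simp only [polyAct, map_mul, Units.val_mul, Matrix.mul_apply, aeval_X, AlgHom.comp_apply,
      map_sum, map_smul, Finset.sum_smul, Finset.smul_sum, mul_smul]
    exact Finset.sum_comm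
  rw [hcomp, AlgHom.comp_apply]

theorem polyAct_one_apply (p : MvPolynomial (Fin 6) F2) : polyAct D 1 p = p := by
  have hid : polyAct D 1 = AlgHom.id F2 _ := by
    refine algHom_ext fun i => ?_
    simp [polyAct, Matrix.one_apply]
  rw [hid, AlgHom.id_apply]

theorem polyAct_inv_apply (σ : G3) (p : MvPolynomial (Fin 6) F2) :
    polyAct D σ⁻¹ (polyAct D σ p) = p := by
  rw [← polyAct_mul_apply, mul_inv_cancel, polyAct_one_apply]

theorem polyAct_apply_inv (σ : G3) (p : MvPolynomial (Fin 6) F2) :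
    polyAct D σ (polyAct D σ⁻¹ p) = p := by
  rw [← polyAct_mul_apply, inv_mul_cancel, polyAct_one_apply]

theorem isHomogeneous_polyAct (σ : G3) {p : MvPolynomial (Fin 6) F2} {n : ℕ}
    (hp : p.IsHomogeneous n) : (polyAct D σ p).IsHomogeneous n := by
  have h := hp.aeval (n := 1) (fun i => ∑ j, (D σ : Matrix (Fin 6) (Fin 6) F2) i j • X j) fun i =>
    IsHomogeneous.sum _ _ _ fun j _ => by
      rw [smul_eq_C_mul]
      exact (isHomogeneous_X _ _).C_mul _
  rwa [one_mul] at h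

theorem polyAct_mem_invH_iff {γ : G3} {H : Subgroup G3} {p : MvPolynomial (Fin 6) F2} :
    polyAct D γ p ∈ invH D H ↔ p ∈ invH D (MulAut.conj γ • H) := by
  have hconj (σ : G3) : polyAct D (MulAut.conj γ • σ) p = p ↔
      polyAct D σ (polyAct D γ p) = polyAct D γ p := by
    rw [MulAut.smul_def, MulAut.conj_apply, polyAct_mul_apply, polyAct_mul_apply]
    exact (Function.LeftInverse.injective (polyAct_apply_inv D γ)).eq_iff' (polyAct_inv_apply D γ p)
  refine ⟨fun hp σ hσ => ?_, fun hp σ hσ => ?_⟩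
  · obtain ⟨τ, hτ, rfl⟩ := Subgroup.mem_smul_pointwise_iff_exists _ _ _ |>.1 hσ
    exact (hconj τ).2 (hp τ hτ)
  · exact (hconj σ).1 (hp _ (Subgroup.smul_mem_pointwise_smul _ _ _ hσ))

variable {D}

theorem polyAct_unipotent_zero_one_zero (hA : (D Agen : Matrix (Fin 6) (Fin 6) F2) = DA6) :
    polyAct D (unipotent 0 1 0) = actA := by
  refine algHom_ext fun i => ?_
  rw [unipotent_zero_one_zero, polyAct, aeval_X, hA, actA_X]
  fin_cases i <;> simp [DA6, Fin.sum_univ_six]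

theorem polyAct_unipotent_zero_zero_one (hA : (D Agen : Matrix (Fin 6) (Fin 6) F2) = DA6)
    (hB : (D Bgen : Matrix (Fin 6) (Fin 6) F2) = DB6) :
    polyAct D (unipotent 0 0 1) = actT := by
  have hD : (D (unipotent 0 0 1) : Matrix (Fin 6) (Fin 6) F2) =
      !![1, 0, 0, 0, 0, 0; 0, 1, 0, 0, 0, 0; 0, 1, 1, 0, 1, 0; 0, 0, 0, 1, 0, 0; 0, 0, 0, 0, 1, 0;
        0, 0, 0, 1, 0, 1] := by
    rw [unipotent_zero_zero_one]
    simp only [map_mul, Units.val_mul, hA, hB]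
    decide
  refine algHom_ext fun i => ?_
  rw [polyAct, aeval_X, hD, actT_X]
  fin_cases i <;> simp [Fin.sum_univ_six, add_assoc]

theorem mem_invH_sylowSubgroup_iff (hA : (D Agen : Matrix (Fin 6) (Fin 6) F2) = DA6)
    (hB : (D Bgen : Matrix (Fin 6) (Fin 6) F2) = DB6) {p : MvPolynomial (Fin 6) F2} :
    p ∈ invH D sylowSubgroup ↔ p ∈ transvectionInvariants := by
  rw [mem_transvectionInvariants, ← polyAct_unipotent_zero_one_zero hA,
    ← polyAct_unipotent_zero_zero_one hA hB]
  refine ⟨fun h => ⟨h _ ⟨(0, 1, 0), rfl⟩, h _ ⟨(0, 0, 1), rfl⟩⟩, ?_⟩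
  rintro ⟨hy, hz⟩ _ ⟨⟨x, y, z⟩, rfl⟩
  have hx : polyAct D (unipotent 1 0 0) p = p := by
    have hcomm : unipotent 1 0 0 =
        unipotent 0 1 0 * unipotent 0 0 1 * (unipotent 0 1 0 * unipotent 0 0 1) := by
      decide
    simp only [hcomm, polyAct_mul_apply, hy, hz]
  have hfix (σ : F2 → G3) (h₀ : σ 0 = 1) (h₁ : polyAct D (σ 1) p = p) (t : F2) :
      polyAct D (σ t) p = p := by
    fin_cases t
    · exact h₀ ▸ polyAct_one_apply D p
    · exact h₁
  have hfactor : unipotent x y z =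
      unipotent (x + y * z) 0 0 * unipotent 0 y 0 * unipotent 0 0 z := by
    revert x y z
    decide
  change polyAct D (unipotent x y z) p = p
  rw [hfactor, polyAct_mul_apply, polyAct_mul_apply,
    hfix (unipotent · 0 0) unipotent_zero hx, hfix (unipotent 0 · 0) unipotent_zero hy,
    hfix (unipotent 0 0 ·) unipotent_zero hz]

end Action

end SylowInvariants

open SylowInvariants in
/-- Let `D ≤ G` be a `2`-Sylow subgroup (so `|D| = 8`). Then there exist
algebraically independent homogeneous invariants `f'₁, …, f'₆ ∈ S[W'^*]^D` of degrees
`1, 1, 2, 2, 2, 4` and homogeneous invariants `g'₁ = 1, g'₂, g'₃, g'₄ ∈ S[W'^*]^D` of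
degrees `0, 3, 3, 6` such that `S[W'^*]^D` is a free `𝔽₂[f'₁, …, f'₆]`-module with basis
`{g'₁, g'₂, g'₃, g'₄}`; in particular `S[W'^*]^D` is Cohen-Macaulay. -/
theorem stmt13 (D : G3 →* GL (Fin 6) F2)
    (hA : (D Agen : Matrix (Fin 6) (Fin 6) F2) = DA6)
    (hB : (D Bgen : Matrix (Fin 6) (Fin 6) F2) = DB6)
    (P : Sylow 2 G3) :
    Nat.card (P : Subgroup G3) = 8 ∧
    ∃ f' : Fin 6 → (invH D P),
      AlgebraicIndependent F2 f' ∧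
      (∀ i, (f' i : MvPolynomial (Fin 6) F2).IsHomogeneous (![1, 1, 2, 2, 2, 4] i)) ∧
      ∃ g' : Fin 4 → (invH D P),
        g' 0 = 1 ∧
        (∀ j, (g' j : MvPolynomial (Fin 6) F2).IsHomogeneous (![0, 3, 3, 6] j)) ∧
        ∃ b : Module.Basis (Fin 4) (Algebra.adjoin F2 (Set.range f')) (invH D P),
          ∀ j, b j = g' j := by
  obtain ⟨γ, hγ⟩ := exists_eq_conj_smul_sylowSubgroup P
  refine ⟨card_sylow P, ?_⟩
  have hmem {p : MvPolynomial (Fin 6) F2} :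
      p ∈ invH D P ↔ polyAct D γ p ∈ transvectionInvariants := by
    rw [hγ, ← polyAct_mem_invH_iff, mem_invH_sylowSubgroup_iff hA hB]
  have hlift {p : MvPolynomial (Fin 6) F2} (hp : p ∈ transvectionInvariants) :
      polyAct D γ⁻¹ p ∈ invH D P :=
    hmem.2 ((polyAct_apply_inv D γ p).symm ▸ hp)
  let f' (i : Fin 6) : invH D P := ⟨_, hlift (primary_mem_transvectionInvariants i)⟩
  let g' (j : Fin 4) : invH D P := ⟨_, hlift (secondary_mem_transvectionInvariants j)⟩
  have hbij : Function.Bijective (hironakaMap F2 f' g') := by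
    refine hironakaMap_bijective_of_map_eq (φ := polyAct D γ⁻¹)
      (Function.LeftInverse.injective (polyAct_apply_inv D γ)) (fun _ => rfl) (fun _ => rfl)
      hironakaMap_primary_secondary_injective fun p hp => ?_
    obtain ⟨F, hF⟩ := mem_range_hironakaMap_of_mem_transvectionInvariants (hmem.1 hp)
    exact ⟨F, by rw [hF, polyAct_inv_apply]⟩
  exact ⟨f', algebraicIndependent_of_hironakaMap_injective hbij.1,
    fun i => isHomogeneous_polyAct D _ (isHomogeneous_primary i), g', Subtype.ext (map_one _),
    fun j => isHomogeneous_polyAct D _ (isHomogeneous_secondary j),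
    exists_basis_adjoin_of_hironakaMap_bijective hbij⟩
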